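/- arXiv:1710.01985 — 2 statements merged into one kernel-verified Lean document; each statement's English description precedes it below -/
import Mathlib

section
/- Let n, Π be positive integers with Π dividing n, let A be a fixed n×n real matrix, let E be a fixed n×n diagonal matrix all of whose diagonal entries are 0 or 1, and let φ > 0. Using one common choice of the random functions P₁, P₂, s₁, s₂, form the Cartesian sketches Cart(EA) and Cart(AE). Then for any fixed bucket (h, g) ∈ {1,…,Π}², the probability that both |Cart(EA)_{h,g}| < φ/4 and |Cart(AE)_{h,g}| < φ/4 is at least 1 − 32·‖A‖_F²/(Π²·φ²). -/
open ProbabilityTheory MeasureTheory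
open scoped ENNReal

/-- A function `f : Fin n → Fin K` is an equipartition if every fiber has
cardinality exactly `n / K`. -/
def IsEquip (n K : ℕ) (f : Fin n → Fin K) : Prop :=
  ∀ b : Fin K, (Finset.univ.filter fun a => f a = b).card = n / K

/-- The `(h, g)` bucket of the Cartesian sketch of the matrix `A`, as a function of the
outcome `ω = (P₁, P₂, s₁, s₂)`:
`Cart(A)_{h,g} = ∑_{P₁ x = h} ∑_{P₂ y = g} s₁ x · s₂ y · A x y`. -/
def cartEntry (n K : ℕ) (A : Matrix (Fin n) (Fin n) ℝ) (h g : Fin K)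
    (ω : (Fin n → Fin K) × (Fin n → Fin K) × (Fin n → ℝ) × (Fin n → ℝ)) : ℝ :=
  ∑ x, ∑ y, if ω.1 x = h ∧ ω.2.1 y = g then ω.2.2.1 x * ω.2.2.2 y * A x y else 0

/-- The joint law of `(P₁, P₂, s₁, s₂)`: `P₁, P₂` are independent uniform random
equipartitions, and `s₁, s₂` are random sign functions with laws `σ₁, σ₂`, all four
mutually independent. -/
noncomputable def sketchMeasure (n K : ℕ) (σ₁ σ₂ : Measure (Fin n → ℝ)) :
    Measure ((Fin n → Fin K) × (Fin n → Fin K) × (Fin n → ℝ) × (Fin n → ℝ)) :=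
  (uniformOn {f | IsEquip n K f}).prod
    ((uniformOn {f | IsEquip n K f}).prod (σ₁.prod σ₂))

/-!
Fix a bucket `(h, g)`. It is the linear combination `∑ A x y • W (x, y)` of the random weights
`W (x, y) = 1[P₁ x = h] · 1[P₂ y = g] · s₁ x · s₂ y`. The signs make distinct weights orthogonal in
`L²`, and since `P₁` and `P₂` hit a given class with probability `1 / K`, each weight has second
moment `1 / K²`. By Pythagoras the bucket of any matrix `B` has second moment `‖B‖_F² / K²`, so
Markov's inequality for its square bounds the probability that it exceeds `φ / 4` in magnitude by
`16 ‖B‖_F² / (K² φ²)`. Masking does not increase `‖·‖_F`; the union bound over `B = E A` and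
`B = A E` gives the factor `32`.
-/

section Isotropic

variable {ι κ Ω Ω' : Type*} [MeasurableSpace Ω] [MeasurableSpace Ω'] {μ : Measure Ω}
  {ν : Measure Ω'} {X : ι → Ω → ℝ} {a b : ℝ}

/-- A square-integrable random vector `X` is isotropic with constant `c` if its second moment
matrix `E[X i * X j]` is `c` times the identity matrix. The diagonal and off-diagonal entries are
separate fields so that no decidable equality on `ι` is needed. -/
structure IsIsotropic (X : ι → Ω → ℝ) (c : ℝ) (μ : Measure Ω) : Prop where
  memLp : ∀ i, MemLp (X i) 2 μ
  integral_sq : ∀ i, ∫ ω, X i ω ^ 2 ∂μ = c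
  integral_mul_of_ne : ∀ ⦃i j⦄, i ≠ j → ∫ ω, X i ω * X j ω ∂μ = 0

lemma memLp_two_mul_prod [SFinite μ] [SFinite ν] {f : Ω → ℝ} {g : Ω' → ℝ} (hf : MemLp f 2 μ)
    (hg : MemLp g 2 ν) : MemLp (fun ω : Ω × Ω' => f ω.1 * g ω.2) 2 (μ.prod ν) := by
  refine (memLp_two_iff_integrable_sq
    (hf.aestronglyMeasurable.comp_fst.mul hg.aestronglyMeasurable.comp_snd)).2 ?_
  simpa only [Pi.mul_apply, mul_pow] using hf.integrable_sq.mul_prod hg.integrable_sq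

lemma integral_mul_prod_mul_mul_prod [SFinite μ] [SFinite ν] (f f' : Ω → ℝ) (g g' : Ω' → ℝ) :
    ∫ ω, f ω.1 * g ω.2 * (f' ω.1 * g' ω.2) ∂(μ.prod ν) =
      (∫ ω, f ω * f' ω ∂μ) * ∫ ω, g ω * g' ω ∂ν := by
  rw [← integral_prod_mul]
  exact integral_congr_ae (.of_forall fun _ => mul_mul_mul_comm _ _ _ _)

namespace IsIsotropic

lemma mul_prod [SFinite μ] [SFinite ν] {Y : κ → Ω' → ℝ} (hX : IsIsotropic X a μ)
    (hY : IsIsotropic Y b ν) :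
    IsIsotropic (fun (p : ι × κ) (ω : Ω × Ω') => X p.1 ω.1 * Y p.2 ω.2) (a * b) (μ.prod ν) where
  memLp p := memLp_two_mul_prod (hX.memLp p.1) (hY.memLp p.2)
  integral_sq p := by
    simp only [mul_pow]
    rw [integral_prod_mul (X p.1 · ^ 2) (Y p.2 · ^ 2), hX.integral_sq, hY.integral_sq]
  integral_mul_of_ne p q hpq := by
    rw [integral_mul_prod_mul_mul_prod]
    by_cases hfst : p.1 = q.1
    · rw [hY.integral_mul_of_ne fun hsnd => hpq (Prod.ext hfst hsnd), mul_zero]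
    · rw [hX.integral_mul_of_ne hfst, zero_mul]

lemma independent_mul [SFinite μ] [SFinite ν] {F : ι → Ω' → ℝ} (hX : IsIsotropic X a μ)
    (hF : ∀ i, MemLp (F i) 2 ν) (hF_sq : ∀ i, ∫ ω, F i ω ^ 2 ∂ν = b) :
    IsIsotropic (fun i (ω : Ω' × Ω) => F i ω.1 * X i ω.2) (b * a) (ν.prod μ) where
  memLp i := memLp_two_mul_prod (hF i) (hX.memLp i)
  integral_sq i := by
    simp only [mul_pow]
    rw [integral_prod_mul (F i · ^ 2) (X i · ^ 2), hF_sq, hX.integral_sq]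
  integral_mul_of_ne i j hij := by
    rw [integral_mul_prod_mul_mul_prod, hX.integral_mul_of_ne hij, mul_zero]

variable [Fintype ι]

lemma memLp_sum_mul (hX : IsIsotropic X a μ) (v : ι → ℝ) :
    MemLp (fun ω => ∑ i, v i * X i ω) 2 μ :=
  memLp_finsetSum _ fun i _ => (hX.memLp i).const_mul (v i)

lemma integral_sum_mul_sq (hX : IsIsotropic X a μ) (v : ι → ℝ) :
    ∫ ω, (∑ i, v i * X i ω) ^ 2 ∂μ = a * ∑ i, v i ^ 2 := by
  have hint (i j : ι) : Integrable (fun ω => v i * v j * (X i ω * X j ω)) μ :=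
    ((hX.memLp i).integrable_mul (hX.memLp j)).const_mul _
  calc ∫ ω, (∑ i, v i * X i ω) ^ 2 ∂μ
      = ∫ ω, ∑ i, ∑ j, v i * v j * (X i ω * X j ω) ∂μ := by
        simp only [sq, Finset.sum_mul_sum, mul_mul_mul_comm]
    _ = ∑ i, ∑ j, v i * v j * ∫ ω, X i ω * X j ω ∂μ := by
        rw [integral_finsetSum _ fun i _ => integrable_finsetSum _ fun j _ => hint i j]
        simp only [integral_finsetSum _ fun j _ => hint _ j, integral_const_mul]
    _ = ∑ i, v i ^ 2 * a := by
        refine Finset.sum_congr rfl fun i _ => ?_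
        rw [Finset.sum_eq_single i (fun j _ hji => by rw [hX.integral_mul_of_ne hji.symm, mul_zero])
          (by simp), ← hX.integral_sq i]
        simp only [sq]
    _ = a * ∑ i, v i ^ 2 := by rw [← Finset.sum_mul, mul_comm]

end IsIsotropic

lemma isIsotropic_of_pairwise_uniform_sign [IsProbabilityMeasure μ] (hX : ∀ i, Measurable (X i))
    (hval : ∀ i, ∀ᵐ ω ∂μ, X i ω = 1 ∨ X i ω = -1)
    (hpair : ∀ i j, i ≠ j → ∀ a b : ℝ, (a = 1 ∨ a = -1) → (b = 1 ∨ b = -1) →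
      μ {ω | X i ω = a ∧ X j ω = b} = 1 / 4) :
    IsIsotropic X 1 μ where
  memLp i := MemLp.of_bound (hX i).aestronglyMeasurable 1 <| by
    filter_upwards [hval i] with ω hω
    rcases hω with hω | hω <;> simp [hω]
  integral_sq i := by
    rw [integral_congr_ae (g := fun _ => (1 : ℝ))]
    · simp
    · filter_upwards [hval i] with ω hω
      rcases hω with hω | hω <;> simp [hω]
  integral_mul_of_ne i j hij := by
    have hmeas (a b : ℝ) : MeasurableSet {ω | X i ω = a ∧ X j ω = b} :=
      (hX i (measurableSet_singleton a)).inter (hX j (measurableSet_singleton b))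
    set agree := {ω | X i ω = 1 ∧ X j ω = 1} ∪ {ω | X i ω = -1 ∧ X j ω = -1} with hagree
    have hagree_meas : MeasurableSet agree := (hmeas 1 1).union (hmeas (-1) (-1))
    have hagree_half : μ.real agree = 1 / 2 := by
      rw [hagree, measureReal_union _ (hmeas (-1) (-1)), measureReal_def, measureReal_def,
        hpair i j hij 1 1 (.inl rfl) (.inl rfl), hpair i j hij (-1) (-1) (.inr rfl) (.inr rfl)]
      · norm_num
      · rw [Set.disjoint_left]
        rintro ω ⟨hone, -⟩ ⟨hneg, -⟩
        linarith
    have hmul : (fun ω => X i ω * X j ω) =ᵐ[μ] fun ω => 2 * agree.indicator 1 ω - 1 := by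
      filter_upwards [hval i, hval j] with ω hi hj
      rcases hi with hi | hi <;> rcases hj with hj | hj <;>
        norm_num [hagree, hi, hj, Set.indicator_apply]
    rw [integral_congr_ae hmul, integral_sub
      (((integrable_const 1).indicator hagree_meas).const_mul 2) (integrable_const 1),
      integral_const_mul, integral_indicator_one hagree_meas, hagree_half]
    simp

end Isotropic

section Tail

variable {Ω : Type*} [MeasurableSpace Ω] {μ : Measure Ω}

lemma measure_le_abs_le_integral_sq_div_sq {X : Ω → ℝ} (hX : MemLp X 2 μ) {ε : ℝ} (hε : 0 < ε) :
    μ {ω | ε ≤ |X ω|} ≤ ENNReal.ofReal ((∫ ω, X ω ^ 2 ∂μ) / ε ^ 2) := by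
  have hset : {ω | ε ≤ |X ω|} = {ω | ε ^ 2 ≤ X ω ^ 2} := by
    ext ω
    rw [Set.mem_ofPred_eq, Set.mem_ofPred_eq, sq_le_sq, abs_of_pos hε]
  rw [hset, ← ofReal_measureReal (hX.integrable_sq.measure_ge_lt_top (by positivity)).ne]
  refine ENNReal.ofReal_le_ofReal ((le_div_iff₀' (by positivity)).2 ?_)
  exact mul_meas_ge_le_integral_of_nonneg (.of_forall fun ω => sq_nonneg (X ω)) hX.integrable_sq _

lemma one_sub_measure_compl_add_le_measure_inter [IsProbabilityMeasure μ] (s t : Set Ω) :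
    1 - (μ sᶜ + μ tᶜ) ≤ μ (s ∩ t) := by
  rw [tsub_le_iff_right, ← measure_univ (μ := μ)]
  calc μ Set.univ ≤ μ (s ∩ t) + μ (s ∩ t)ᶜ := measure_univ_le_add_compl _
    _ ≤ μ (s ∩ t) + (μ sᶜ + μ tᶜ) := by
      rw [Set.compl_inter]
      gcongr
      exact measure_union_le _ _

end Tail

section Masking

variable {m n : Type*} [Fintype m] [Fintype n]

lemma sum_sq_diagonal_mul_le [DecidableEq m] {d : m → ℝ} (hd : ∀ i, |d i| ≤ 1)
    (A : Matrix m n ℝ) :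
    ∑ x, ∑ y, (Matrix.diagonal d * A) x y ^ 2 ≤ ∑ x, ∑ y, A x y ^ 2 := by
  gcongr ∑ x, ∑ y, ?_ with x _ y _
  rw [Matrix.diagonal_mul, mul_pow]
  exact mul_le_of_le_one_left (sq_nonneg _) ((sq_le_one_iff_abs_le_one _).2 (hd x))

lemma sum_sq_mul_diagonal_le [DecidableEq n] {d : n → ℝ} (hd : ∀ i, |d i| ≤ 1)
    (A : Matrix m n ℝ) :
    ∑ x, ∑ y, (A * Matrix.diagonal d) x y ^ 2 ≤ ∑ x, ∑ y, A x y ^ 2 := by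
  gcongr ∑ x, ∑ y, ?_ with x _ y _
  rw [Matrix.mul_diagonal, mul_pow]
  exact mul_le_of_le_one_right (sq_nonneg _) ((sq_le_one_iff_abs_le_one _).2 (hd y))

end Masking

lemma uniformOn_preimage_equiv {Ω : Type*} [MeasurableSpace Ω] [MeasurableSingletonClass Ω]
    {s : Set Ω} (hs : s.Finite) (e : Equiv.Perm Ω) (he : e ⁻¹' s = s) (t : Set Ω) :
    uniformOn s (e ⁻¹' t) = uniformOn s t := by
  have hst : (s ∩ t).Finite := hs.inter_of_left t
  have hpre : s ∩ e ⁻¹' t = e ⁻¹' (s ∩ t) := by rw [Set.preimage_inter, he]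
  have hpre_fin : (e ⁻¹' (s ∩ t)).Finite := hst.preimage e.injective.injOn
  rw [uniformOn, cond_apply hs.measurableSet, cond_apply hs.measurableSet, hpre,
    Measure.count_apply hst.measurableSet, Measure.count_apply hpre_fin.measurableSet,
    Set.encard_preimage_of_bijective e.bijective]

section Equipartition

variable {n K : ℕ}

lemma isEquip_perm_comp_iff {f : Fin n → Fin K} (e : Equiv.Perm (Fin K)) :
    IsEquip n K (e ∘ f) ↔ IsEquip n K f := by
  simp only [IsEquip, Function.comp_apply, ← Equiv.eq_symm_apply]
  exact ⟨fun hf b => by simpa only [e.symm_apply_apply] using hf (e b), fun hf b => hf (e.symm b)⟩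

lemma exists_isEquip (hK : 0 < K) (hdvd : K ∣ n) : ∃ f, IsEquip n K f := by
  obtain ⟨m, rfl⟩ := hdvd
  refine ⟨fun a => (finProdFinEquiv.symm a).1, fun b => ?_⟩
  calc (Finset.univ.filter fun a : Fin (K * m) => (finProdFinEquiv.symm a).1 = b).card
      = (({b} : Finset (Fin K)) ×ˢ (Finset.univ : Finset (Fin m))).card :=
        (Finset.card_equiv finProdFinEquiv fun p => by
          simp only [Finset.mem_product, Finset.mem_singleton, Finset.mem_univ, and_true,
            Finset.mem_filter_univ, Equiv.symm_apply_apply]).symm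
    _ = K * m / K := by simp [Nat.mul_div_cancel_left m hK]

lemma isProbabilityMeasure_uniformOn_isEquip (hK : 0 < K) (hdvd : K ∣ n) :
    IsProbabilityMeasure (uniformOn {f | IsEquip n K f}) :=
  isProbabilityMeasure_uniformOn (Set.toFinite _) (exists_isEquip hK hdvd)

lemma uniformOn_isEquip_apply_eq (x : Fin n) (b c : Fin K) :
    uniformOn {f | IsEquip n K f} {f | f x = b} = uniformOn {f | IsEquip n K f} {f | f x = c} := by
  let relabel : Equiv.Perm (Fin n → Fin K) := (Equiv.refl _).arrowCongr (Equiv.swap b c)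
  have hrelabel : relabel ⁻¹' {f | IsEquip n K f} = {f | IsEquip n K f} :=
    Set.ext fun _ => isEquip_perm_comp_iff (Equiv.swap b c)
  have hpre : relabel ⁻¹' {f | f x = c} = {f | f x = b} := by
    ext f
    simp [relabel, Equiv.swap_apply_eq_iff]
  rw [← hpre, uniformOn_preimage_equiv (Set.toFinite _) relabel hrelabel]

lemma uniformOn_isEquip_real_apply (hdvd : K ∣ n) (x : Fin n) (b : Fin K) :
    (uniformOn {f | IsEquip n K f}).real {f | f x = b} = 1 / K := by
  have := isProbabilityMeasure_uniformOn_isEquip b.pos hdvd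
  have hsum := sum_measureReal_preimage_singleton (μ := uniformOn {f | IsEquip n K f}) Finset.univ
    (f := fun f => f x) fun c _ => (Set.toFinite _).measurableSet
  have hconst (c : Fin K) : (uniformOn {f | IsEquip n K f}).real ((fun f => f x) ⁻¹' {c}) =
      (uniformOn {f | IsEquip n K f}).real {f | f x = b} :=
    congrArg ENNReal.toReal (uniformOn_isEquip_apply_eq x c b)
  simp only [hconst, Finset.sum_const, Finset.card_univ, Fintype.card_fin, nsmul_eq_mul,
    Finset.coe_univ, Set.preimage_univ, probReal_univ] at hsum
  have hK : (K : ℝ) ≠ 0 := Nat.cast_ne_zero.2 b.pos.ne'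
  rwa [eq_div_iff hK, mul_comm]

lemma integral_indicator_sq_uniformOn_isEquip (hdvd : K ∣ n) (x : Fin n) (b : Fin K) :
    ∫ f, (if f x = b then (1 : ℝ) else 0) ^ 2 ∂(uniformOn {f | IsEquip n K f}) = 1 / K := by
  rw [← uniformOn_isEquip_real_apply hdvd x b,
    ← integral_indicator_one (Set.toFinite _).measurableSet]
  simp [Set.indicator_apply]

end Equipartition

section Sketch

variable {n K : ℕ} {σ₁ σ₂ : Measure (Fin n → ℝ)}

/-- The random weight with which the entry of a matrix at the position `p` enters the bucket
`(h, g)` of its Cartesian sketch, nested in the order in which `sketchMeasure` is a product. -/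
def cartWeight (h g : Fin K) (p : Fin n × Fin n)
    (ω : (Fin n → Fin K) × (Fin n → Fin K) × (Fin n → ℝ) × (Fin n → ℝ)) : ℝ :=
  (if ω.1 p.1 = h then 1 else 0) *
    ((if ω.2.1 p.2 = g then 1 else 0) * (ω.2.2.1 p.1 * ω.2.2.2 p.2))

lemma cartEntry_eq_sum_mul_cartWeight (A : Matrix (Fin n) (Fin n) ℝ) (h g : Fin K)
    (ω : (Fin n → Fin K) × (Fin n → Fin K) × (Fin n → ℝ) × (Fin n → ℝ)) :
    cartEntry n K A h g ω = ∑ p : Fin n × Fin n, A p.1 p.2 * cartWeight h g p ω := by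
  rw [cartEntry, Fintype.sum_prod_type]
  refine Finset.sum_congr rfl fun x _ => Finset.sum_congr rfl fun y _ => ?_
  rw [cartWeight, ite_and]
  split_ifs <;> ring

lemma isProbabilityMeasure_sketchMeasure [IsProbabilityMeasure σ₁] [IsProbabilityMeasure σ₂]
    (hK : 0 < K) (hdvd : K ∣ n) : IsProbabilityMeasure (sketchMeasure n K σ₁ σ₂) := by
  have := isProbabilityMeasure_uniformOn_isEquip hK hdvd
  unfold sketchMeasure
  infer_instance

variable [SFinite σ₁] [SFinite σ₂]

lemma isIsotropic_cartWeight (hdvd : K ∣ n) (hσ₁ : IsIsotropic (fun i s => s i) 1 σ₁)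
    (hσ₂ : IsIsotropic (fun i s => s i) 1 σ₂) (h g : Fin K) :
    IsIsotropic (cartWeight h g) (1 / K ^ 2) (sketchMeasure n K σ₁ σ₂) := by
  have := isProbabilityMeasure_uniformOn_isEquip h.pos hdvd
  have hprod := ((hσ₁.mul_prod hσ₂).independent_mul (fun _ => MemLp.of_discrete)
    fun p => integral_indicator_sq_uniformOn_isEquip hdvd p.2 g).independent_mul
      (fun _ => MemLp.of_discrete) fun p => integral_indicator_sq_uniformOn_isEquip hdvd p.1 h
  convert! hprod using 1
  ring

lemma sketchMeasure_le_abs_cartEntry_le (hdvd : K ∣ n) (hσ₁ : IsIsotropic (fun i s => s i) 1 σ₁)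
    (hσ₂ : IsIsotropic (fun i s => s i) 1 σ₂) (A : Matrix (Fin n) (Fin n) ℝ) (h g : Fin K)
    {ε : ℝ} (hε : 0 < ε) :
    sketchMeasure n K σ₁ σ₂ {ω | ε ≤ |cartEntry n K A h g ω|} ≤
      ENNReal.ofReal ((∑ x, ∑ y, A x y ^ 2) / (K ^ 2 * ε ^ 2)) := by
  have hW := isIsotropic_cartWeight hdvd hσ₁ hσ₂ h g
  simp only [cartEntry_eq_sum_mul_cartWeight]
  refine (measure_le_abs_le_integral_sq_div_sq (hW.memLp_sum_mul _) hε).trans_eq ?_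
  rw [hW.integral_sum_mul_sq, Fintype.sum_prod_type, one_div_mul_eq_div, div_div]

end Sketch

theorem cart_sketch_masked_small_error_general {n K : ℕ} (hdvd : K ∣ n)
    (A : Matrix (Fin n) (Fin n) ℝ) {d : Fin n → ℝ} (hd : ∀ i, |d i| ≤ 1) {φ : ℝ} (hφ : 0 < φ)
    {σ₁ σ₂ : Measure (Fin n → ℝ)} [IsProbabilityMeasure σ₁] [IsProbabilityMeasure σ₂]
    (hσ₁ : IsIsotropic (fun i s => s i) 1 σ₁) (hσ₂ : IsIsotropic (fun i s => s i) 1 σ₂)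
    (h g : Fin K) :
    1 - ENNReal.ofReal (32 * (∑ x, ∑ y, A x y ^ 2) / (K ^ 2 * φ ^ 2)) ≤
      sketchMeasure n K σ₁ σ₂
        {ω | |cartEntry n K (Matrix.diagonal d * A) h g ω| < φ / 4 ∧
             |cartEntry n K (A * Matrix.diagonal d) h g ω| < φ / 4} := by
  have := isProbabilityMeasure_sketchMeasure (σ₁ := σ₁) (σ₂ := σ₂) h.pos hdvd
  have hlarge {B : Matrix (Fin n) (Fin n) ℝ} (hB : ∑ x, ∑ y, B x y ^ 2 ≤ ∑ x, ∑ y, A x y ^ 2) :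
      sketchMeasure n K σ₁ σ₂ {ω | |cartEntry n K B h g ω| < φ / 4}ᶜ ≤
        ENNReal.ofReal ((∑ x, ∑ y, A x y ^ 2) / (K ^ 2 * (φ / 4) ^ 2)) := by
    simp only [Set.compl_ofPred, not_lt]
    refine (sketchMeasure_le_abs_cartEntry_le hdvd hσ₁ hσ₂ B h g (by positivity)).trans ?_
    gcongr
  calc 1 - ENNReal.ofReal (32 * (∑ x, ∑ y, A x y ^ 2) / (K ^ 2 * φ ^ 2))
      = 1 - (ENNReal.ofReal ((∑ x, ∑ y, A x y ^ 2) / (K ^ 2 * (φ / 4) ^ 2)) +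
          ENNReal.ofReal ((∑ x, ∑ y, A x y ^ 2) / (K ^ 2 * (φ / 4) ^ 2))) := by
        rw [← ENNReal.ofReal_add (by positivity) (by positivity)]
        congr 2
        ring
    _ ≤ 1 - (_ + _) := tsub_le_tsub_left (add_le_add (hlarge (sum_sq_diagonal_mul_le hd A))
        (hlarge (sum_sq_mul_diagonal_le hd A))) 1
    _ ≤ _ := one_sub_measure_compl_add_le_measure_inter _ _

/-- Let `A` be a fixed `n × n` matrix and `E = diagonal d` a fixed
masking matrix (each `d i` is `0` or `1`).  Using one common choice of the random
functions `P₁, P₂, s₁, s₂`, form the Cartesian sketches `Cart(E·A)` and `Cart(A·E)`.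
For any fixed bucket `(h, g)` and `φ > 0`, with probability at least
`1 − 32‖A‖_F²/(K²φ²)` both bucket values have magnitude less than `φ/4`. -/
theorem cart_sketch_masked_small_error (n K : ℕ) (hn : 0 < n) (hK : 0 < K) (hdvd : K ∣ n)
    (A : Matrix (Fin n) (Fin n) ℝ) (d : Fin n → ℝ) (hd : ∀ i, d i = 0 ∨ d i = 1)
    (φ : ℝ) (hφ : 0 < φ)
    (σ₁ σ₂ : Measure (Fin n → ℝ)) [IsProbabilityMeasure σ₁] [IsProbabilityMeasure σ₂]
    (hval₁ : ∀ᵐ s ∂σ₁, ∀ i, s i = 1 ∨ s i = -1)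
    (hval₂ : ∀ᵐ s ∂σ₂, ∀ i, s i = 1 ∨ s i = -1)
    (huni₁ : ∀ i, σ₁ {s | s i = 1} = 1 / 2)
    (huni₂ : ∀ i, σ₂ {s | s i = 1} = 1 / 2)
    (hpair₁ : ∀ i j : Fin n, i ≠ j → ∀ a b : ℝ, (a = 1 ∨ a = -1) → (b = 1 ∨ b = -1) →
      σ₁ {s | s i = a ∧ s j = b} = 1 / 4)
    (hpair₂ : ∀ i j : Fin n, i ≠ j → ∀ a b : ℝ, (a = 1 ∨ a = -1) → (b = 1 ∨ b = -1) →
      σ₂ {s | s i = a ∧ s j = b} = 1 / 4)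
    (h g : Fin K) :
    1 - ENNReal.ofReal (32 * (∑ x, ∑ y, A x y ^ 2) / (K ^ 2 * φ ^ 2)) ≤
      sketchMeasure n K σ₁ σ₂
        {ω | |cartEntry n K (Matrix.diagonal d * A) h g ω| < φ / 4 ∧
             |cartEntry n K (A * Matrix.diagonal d) h g ω| < φ / 4} := by
  exact cart_sketch_masked_small_error_general hdvd A
    (fun i => by rcases hd i with hi | hi <;> simp [hi]) hφ
    (isIsotropic_of_pairwise_uniform_sign measurable_pi_apply (ae_all_iff.1 hval₁) hpair₁)
    (isIsotropic_of_pairwise_uniform_sign measurable_pi_apply (ae_all_iff.1 hval₂) hpair₂) h g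
end

section
/- Let n, Π be positive integers with Π dividing n and n ≥ 2, let v₁, …, v_n ∈ ℝ^p be unit vectors, let P : {1,…,n} → {1,…,Π} be a uniform random equipartition, and let s₁, …, s_n be mutually independent uniform random signs in {−1,+1}, independent of P. Fix h ∈ {1,…,Π} and λ ∈ (0, 1]. Then the probability that ‖Σ_{i : P(i) = h} s_i·v_i‖₂² ≥ (n/Π)·(1 + 22·λ^{−1/2}) is at most λ/121. -/
open MeasureTheory ProbabilityTheory
open scoped RealInnerProductSpace ENNReal

/-!
Fix the bucket `S = {i | P i = h}`, which has `n / K` elements. Under the random signs the squared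
norm `‖∑ i ∈ S, s i • v i‖ ^ 2` has mean `∑ i ∈ S, ‖v i‖ ^ 2 = n / K`, and its variance is twice
the off-diagonal part of the squared Frobenius norm of the Gram matrix of `(v i)_{i ∈ S}`, hence at
most `2 * (n / K) ^ 2` by Cauchy–Schwarz. Both moments follow by adding one vector at a time, since
terms of odd degree in the new sign integrate to zero. Chebyshev's inequality then bounds the
probability conditionally on `P`, uniformly in `P`.
-/

/-- The law of a family of independent uniform random signs indexed by `ι`, encoded as Booleans. -/
noncomputable abbrev signMeasure (ι : Type*) [Fintype ι] [DecidableEq ι] : Measure (ι → Bool) :=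
  (PMF.uniformOfFintype (ι → Bool)).toMeasure

/-- The real sign encoded by a Boolean: `1` for `true`, `-1` for `false`. -/
def boolSign (b : Bool) : ℝ := if b then 1 else -1

lemma boolSign_not (b : Bool) : boolSign (!b) = -boolSign b := by
  cases b <;> simp [boolSign]

lemma boolSign_sq (b : Bool) : boolSign b ^ 2 = 1 := by
  cases b <;> simp [boolSign]

/-- The signed sum `∑ i ∈ S, ± v i`, whose `i`-th sign is encoded by `ε i`. -/
def signedSum {ι E : Type*} [AddCommGroup E] [Module ℝ E] (v : ι → E) (S : Finset ι)
    (ε : ι → Bool) : E :=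
  ∑ i ∈ S, boolSign (ε i) • v i

section Signs

variable {ι : Type*} [Fintype ι] [DecidableEq ι]

lemma integral_signMeasure (f : (ι → Bool) → ℝ) :
    ∫ ε, f ε ∂signMeasure ι = (Fintype.card (ι → Bool) : ℝ)⁻¹ * ∑ ε, f ε := by
  simp [PMF.integral_eq_sum, Finset.mul_sum]

lemma integral_boolSign_mul_of_dependsOn {a : ι} {s : Set ι} (ha : a ∉ s)
    {f : (ι → Bool) → ℝ} (hf : DependsOn f s) :
    ∫ ε, boolSign (ε a) * f ε ∂signMeasure ι = 0 := by
  rw [integral_signMeasure]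
  refine mul_eq_zero_of_right _ ?_
  -- Flipping the sign at `a` is an involution which negates every summand.
  refine Finset.sum_ninvolution (fun ε => Function.update ε a (!ε a)) (fun ε => ?_)
    (fun ε _ hε => ?_) (fun _ => Finset.mem_univ _) (fun ε => by simp)
  · have hflip : f (Function.update ε a (!ε a)) = f ε :=
      hf fun i hi => Function.update_of_ne (ne_of_mem_of_not_mem hi ha) _ _
    rw [hflip, Function.update_self, boolSign_not]
    ring
  · simpa using congrFun hε a

end Signs

section SignedSum

variable {ι E : Type*} [NormedAddCommGroup E] [InnerProductSpace ℝ E]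

lemma dependsOn_signedSum (v : ι → E) (S : Finset ι) : DependsOn (signedSum v S) S :=
  fun _ _ hε => Finset.sum_congr rfl fun i hi => by rw [hε i hi]

lemma inner_signedSum (w : E) (v : ι → E) (S : Finset ι) (ε : ι → Bool) :
    ⟪w, signedSum v S ε⟫ = signedSum (fun i => ⟪w, v i⟫) S ε := by
  simp only [signedSum, inner_sum, real_inner_smul_right, smul_eq_mul]

lemma sum_sum_inner_sq_le (v : ι → E) (S : Finset ι) :
    ∑ i ∈ S, ∑ j ∈ S, ⟪v i, v j⟫ ^ 2 ≤ (∑ i ∈ S, ‖v i‖ ^ 2) ^ 2 := by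
  rw [sq (∑ i ∈ S, _), Finset.sum_mul_sum]
  refine Finset.sum_le_sum fun i _ => Finset.sum_le_sum fun j _ => ?_
  rw [← mul_pow]
  exact sq_le_sq' (neg_le_of_abs_le (abs_real_inner_le_norm _ _)) (real_inner_le_norm _ _)

variable [DecidableEq ι]

lemma norm_sq_signedSum_insert (v : ι → E) {S : Finset ι} {a : ι} (ha : a ∉ S) (ε : ι → Bool) :
    ‖signedSum v (insert a S) ε‖ ^ 2 =
      ‖signedSum v S ε‖ ^ 2 + ‖v a‖ ^ 2 + boolSign (ε a) * (2 * ⟪v a, signedSum v S ε⟫) := by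
  have hins : signedSum v (insert a S) ε = boolSign (ε a) • v a + signedSum v S ε :=
    Finset.sum_insert ha
  rw [hins, norm_add_sq_real, norm_smul, mul_pow, Real.norm_eq_abs, sq_abs, boolSign_sq,
    real_inner_smul_left]
  ring

variable [Fintype ι]

lemma integral_norm_sq_signedSum (v : ι → E) (S : Finset ι) :
    ∫ ε, ‖signedSum v S ε‖ ^ 2 ∂signMeasure ι = ∑ i ∈ S, ‖v i‖ ^ 2 := by
  induction S using Finset.induction_on with
  | empty => simp [signedSum]
  | insert a S ha ih =>
    have hcross : ∫ ε, boolSign (ε a) * (2 * ⟪v a, signedSum v S ε⟫) ∂signMeasure ι = 0 :=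
      integral_boolSign_mul_of_dependsOn (Finset.mem_coe.not.mpr ha)
        fun _ _ hε => by rw [dependsOn_signedSum v S hε]
    simp_rw [norm_sq_signedSum_insert v ha]
    rw [integral_add .of_finite .of_finite, integral_add .of_finite .of_finite, ih, hcross,
      integral_const, Finset.sum_insert ha]
    simp [add_comm]

lemma integral_inner_signedSum_sq (w : E) (v : ι → E) (S : Finset ι) :
    ∫ ε, ⟪w, signedSum v S ε⟫ ^ 2 ∂signMeasure ι = ∑ i ∈ S, ⟪w, v i⟫ ^ 2 := by
  simpa only [inner_signedSum, Real.norm_eq_abs, sq_abs] using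
    integral_norm_sq_signedSum (fun i => ⟪w, v i⟫) S

lemma variance_norm_sq_signedSum (v : ι → E) (S : Finset ι) :
    Var[fun ε => ‖signedSum v S ε‖ ^ 2; signMeasure ι] =
      2 * (∑ i ∈ S, ∑ j ∈ S, ⟪v i, v j⟫ ^ 2 - ∑ i ∈ S, ‖v i‖ ^ 4) := by
  rw [variance_eq_integral .of_discrete, integral_norm_sq_signedSum]
  induction S using Finset.induction_on with
  | empty => simp [signedSum]
  | insert a S ha ih =>
    set D : (ι → Bool) → ℝ := fun ε => ‖signedSum v S ε‖ ^ 2 - ∑ i ∈ S, ‖v i‖ ^ 2 with hD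
    have hsq : ∀ ε, (‖signedSum v (insert a S) ε‖ ^ 2 - ∑ i ∈ insert a S, ‖v i‖ ^ 2) ^ 2 =
        D ε ^ 2 + 4 * ⟪v a, signedSum v S ε⟫ ^ 2 +
          boolSign (ε a) * (4 * D ε * ⟪v a, signedSum v S ε⟫) := fun ε => by
      rw [norm_sq_signedSum_insert v ha, Finset.sum_insert ha]
      linear_combination 4 * ⟪v a, signedSum v S ε⟫ ^ 2 * boolSign_sq (ε a)
    have hcross :
        ∫ ε, boolSign (ε a) * (4 * D ε * ⟪v a, signedSum v S ε⟫) ∂signMeasure ι = 0 :=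
      integral_boolSign_mul_of_dependsOn (Finset.mem_coe.not.mpr ha)
        fun _ _ hε => by simp only [hD, dependsOn_signedSum v S hε]
    simp_rw [hsq]
    rw [integral_add .of_finite .of_finite, integral_add .of_finite .of_finite, ih, hcross,
      integral_const_mul, integral_inner_signedSum_sq]
    simp only [Finset.sum_insert ha, Finset.sum_add_distrib, real_inner_self_eq_norm_sq,
      real_inner_comm (v a)]
    ring

lemma variance_norm_sq_signedSum_le (v : ι → E) (S : Finset ι) :
    Var[fun ε => ‖signedSum v S ε‖ ^ 2; signMeasure ι] ≤ 2 * (∑ i ∈ S, ‖v i‖ ^ 2) ^ 2 := by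
  rw [variance_norm_sq_signedSum]
  have hdiag : 0 ≤ ∑ i ∈ S, ‖v i‖ ^ 4 := by positivity
  linarith [sum_sum_inner_sq_le v S]

lemma signMeasure_norm_sq_signedSum_ge_le {v : ι → E} {S : Finset ι}
    (hS : 0 < ∑ i ∈ S, ‖v i‖ ^ 2) {t : ℝ} (ht : 0 < t) :
    signMeasure ι {ε | (∑ i ∈ S, ‖v i‖ ^ 2) * (1 + t) ≤ ‖signedSum v S ε‖ ^ 2} ≤
      ENNReal.ofReal (2 / t ^ 2) := by
  set m := ∑ i ∈ S, ‖v i‖ ^ 2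
  set X : (ι → Bool) → ℝ := fun ε => ‖signedSum v S ε‖ ^ 2
  have hmean : ∫ ε, X ε ∂signMeasure ι = m := integral_norm_sq_signedSum v S
  calc signMeasure ι {ε | m * (1 + t) ≤ X ε}
      ≤ signMeasure ι {ε | m * t ≤ |X ε - ∫ ε', X ε' ∂signMeasure ι|} := by
        refine measure_mono fun ε (hε : m * (1 + t) ≤ X ε) => ?_
        have hdev : m * t ≤ X ε - m := by linarith
        exact hmean ▸ hdev.trans (le_abs_self _)
    _ ≤ ENNReal.ofReal (Var[X; signMeasure ι] / (m * t) ^ 2) :=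
        meas_ge_le_variance_div_sq .of_discrete (mul_pos hS ht)
    _ ≤ ENNReal.ofReal (2 / t ^ 2) := by
        refine ENNReal.ofReal_le_ofReal ?_
        rw [div_le_div_iff₀ (by positivity) (by positivity)]
        calc Var[X; signMeasure ι] * t ^ 2 ≤ 2 * m ^ 2 * t ^ 2 := by
              gcongr
              exact variance_norm_sq_signedSum_le v S
          _ = 2 * (m * t) ^ 2 := by ring

end SignedSum

lemma measure_prod_le_of_ae_le {α β : Type*} [MeasurableSpace α] [MeasurableSpace β]
    {μ : Measure α} [IsZeroOrProbabilityMeasure μ] {ν : Measure β} {s : Set (α × β)}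
    (hs : MeasurableSet s) {c : ℝ≥0∞} (hc : ∀ᵐ x ∂μ, ν (Prod.mk x ⁻¹' s) ≤ c) :
    μ.prod ν s ≤ c :=
  calc μ.prod ν s ≤ ∫⁻ x, ν (Prod.mk x ⁻¹' s) ∂μ := Measure.prod_apply_le hs
    _ ≤ ∫⁻ _, c ∂μ := lintegral_mono_ae hc
    _ = c * μ Set.univ := lintegral_const c
    _ ≤ c := mul_le_of_le_one_right' prob_le_one

theorem bucket_signed_sum_sq_norm_tail_bound_general {E : Type*} [NormedAddCommGroup E]
    [InnerProductSpace ℝ E] {n K : ℕ} (hn : 0 < n) (hdvd : K ∣ n) {v : Fin n → E}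
    (hv : ∀ i, ‖v i‖ = 1) (h : Fin K) {lam : ℝ} (hlam : 0 < lam)
    {ρ : Measure (Fin n → Fin K)} [IsZeroOrProbabilityMeasure ρ] (hρ : ∀ᵐ f ∂ρ, IsEquip n K f) :
    ρ.prod (signMeasure (Fin n))
        {ω | (n : ℝ) / K * (1 + 22 / √lam) ≤
          ‖signedSum v (Finset.univ.filter fun i => ω.1 i = h) ω.2‖ ^ 2} ≤
      ENNReal.ofReal (lam / 242) := by
  have hnK : (0 : ℝ) < n / K := div_pos (mod_cast hn) (mod_cast h.pos)
  refine measure_prod_le_of_ae_le (Set.toFinite _).measurableSet ?_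
  filter_upwards [hρ] with f hf
  have hmass : ∑ i with f i = h, ‖v i‖ ^ 2 = (n : ℝ) / K := by
    simp [hv, hf h, Nat.cast_div hdvd (Nat.cast_ne_zero.mpr h.pos.ne')]
  have hbound : 2 / (22 / √lam) ^ 2 = lam / 242 := by
    rw [div_pow, Real.sq_sqrt hlam.le]
    field_simp
    norm_num
  have htail := signMeasure_norm_sq_signedSum_ge_le (hmass ▸ hnK) (t := 22 / √lam) (by positivity)
  rwa [hmass, hbound] at htail

/-- Let `v₁, …, v_n ∈ ℝ^p` be unit vectors, `P : [n] → [K]` a uniform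
random equipartition (`K ∣ n`, `n ≥ 2`) and `s₁, …, s_n` mutually independent uniform
random signs, independent of `P` (modeled by the product of the uniform measure on
equipartitions with the uniform measure on `{−1,+1}^n`, encoded via `Fin n → Bool` with
`true ↦ 1`, `false ↦ −1`; this realizes exactly the stated joint law).  Fix `h` and
`λ ∈ (0, 1]`.  Then `ℙ(‖∑_{i : P i = h} s_i • v_i‖² ≥ (n/K)(1 + 22·λ^{−1/2})) ≤ λ/121`. -/
theorem bucket_signed_sum_sq_norm_tail_bound (n K p : ℕ) (hn : 2 ≤ n) (hK : 0 < K)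
    (hdvd : K ∣ n) (v : Fin n → EuclideanSpace ℝ (Fin p)) (hv : ∀ i, ‖v i‖ = 1)
    (h : Fin K) (lam : ℝ) (hlam0 : 0 < lam) (hlam1 : lam ≤ 1)
    (μ : Measure ((Fin n → Fin K) × (Fin n → Bool)))
    (hμ : μ = (uniformOn {f : Fin n → Fin K | IsEquip n K f}).prod
      (PMF.uniformOfFintype (Fin n → Bool)).toMeasure)
    (X : (Fin n → Fin K) × (Fin n → Bool) → ℝ)
    (hX : X = fun ω =>
      ‖∑ i ∈ Finset.univ.filter fun i => ω.1 i = h,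
          (if ω.2 i then (1 : ℝ) else -1) • v i‖ ^ 2) :
    μ {ω | (n : ℝ) / K * (1 + 22 / Real.sqrt lam) ≤ X ω} ≤ ENNReal.ofReal (lam / 121) := by
  subst hμ hX
  exact (bucket_signed_sum_sq_norm_tail_bound_general (by omega) hdvd hv h hlam0
    (ρ := uniformOn {f | IsEquip n K f}) (ae_cond_mem (Set.toFinite _).measurableSet)).trans
    (ENNReal.ofReal_le_ofReal (by linarith))
end
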